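/- arXiv:0712.4336 — 5 statements merged into one kernel-verified Lean document; each statement's English description precedes it below -/
import Mathlib

section
/- Let A be a commutative ring, α a type, and G a function from finite subsets of α to A. Define the cumulant 𝔄(Y) := ∑_{P partition of Y} (−1)^{|P|−1}(|P|−1)! ∏_{X ∈ P} G(X) for every nonempty finite Y ⊆ α. Then for every nonempty finite Y ⊆ α the cluster expansion holds: ∑_{P partition of Y} ∏_{X ∈ P} 𝔄(X) = G(Y). -/
open Finset in
/-- The cumulant `𝔄(Y) = ∑_{P partition of Y} (−1)^{|P|−1} (|P|−1)! ∏_{X ∈ P} G(X)`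
built from a function `G` on finite subsets of `α` with values in a commutative ring. -/
def cumulantOf {α : Type*} [DecidableEq α] {A : Type*} [CommRing A]
    (G : Finset α → A) (Y : Finset α) : A :=
  ∑ P : Finpartition Y,
    (-1 : A) ^ (P.parts.card - 1) * (Nat.factorial (P.parts.card - 1) : A) *
      ∏ X ∈ P.parts, G X

/-!
Fix `y ∈ Y` and normalize `G ∅ = 1`, which changes no cumulant. Splitting off the block containing
`y` shows that `E Y = ∑_P ∏_{X ∈ P} g X` is the only solution of `E ∅ = 1`,
`E Y = ∑_{y ∈ X ⊆ Y} g X * E (Y \ X)`. For `g = 𝔄` the function `G` solves the same recurrence: a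
partition into `n` blocks arises in `n - 1` ways by adding a block that avoids `y`, and the
coefficients `c n = (-1)ⁿ⁻¹ (n - 1)!` satisfy `c n + (n - 1) * c (n - 1) = 0` for `n ≥ 2`, so that
only the one-block partition survives. These recurrences are the combinatorial form of the
differential equations `D (exp a) = D a * exp a` and `D (log b) * b = D b`.
-/

open Finset

section Lattice

variable {α : Type*}

theorem finpartition_sup_erase_parts [GeneralizedBooleanAlgebra α] [DecidableEq α] {a b : α}
    (P : Finpartition a) (hb : b ∈ P.parts) : (P.parts.erase b).sup id = a \ b := by
  have hdisj : Disjoint b ((P.parts.erase b).sup id) :=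
    P.supIndep (erase_subset b P.parts) hb (notMem_erase b P.parts)
  have hsup : b ⊔ (P.parts.erase b).sup id = a :=
    sup_insert.symm.trans (by rw [insert_erase hb, P.sup_parts])
  calc
    _ = (b ⊔ (P.parts.erase b).sup id) \ b := hdisj.sup_sdiff_cancel_left.symm
    _ = a \ b := by rw [hsup]

theorem finpartition_card_parts_eq_one_iff [Lattice α] [OrderBot α] {a : α} (ha : a ≠ ⊥)
    {P : Finpartition a} : #P.parts = 1 ↔ P = Finpartition.indiscrete ha := by
  refine ⟨fun h ↦ ?_, ?_⟩
  · obtain ⟨b, hb⟩ := card_eq_one.1 h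
    have hba : b = a := by simpa only [hb, sup_singleton, id] using P.sup_parts
    exact Finpartition.ext (hb.trans (congrArg _ hba))
  · rintro rfl
    exact card_singleton a

end Lattice

section Finset

variable {α M : Type*} [DecidableEq α] [AddCommMonoid M] {s : Finset α} {y : α}

theorem finpartition_filter_mem_parts (P : Finpartition s) (hy : y ∈ s) :
    {t ∈ P.parts | y ∈ t} = {P.part y} := by
  ext t
  rw [mem_filter, mem_singleton]
  constructor
  · rintro ⟨ht, hyt⟩
    exact (P.part_eq_of_mem ht hyt).symm
  · rintro rfl
    exact ⟨P.part_mem.2 hy, P.mem_part hy⟩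

theorem finpartition_card_filter_notMem_parts (P : Finpartition s) (hy : y ∈ s) :
    #{t ∈ P.parts | y ∉ t} = #P.parts - 1 := by
  rw [← card_filter_add_card_filter_not (s := P.parts) (y ∈ ·),
    finpartition_filter_mem_parts P hy, card_singleton, Nat.add_sub_cancel_left]

theorem sum_finpartition_sum_parts_erase (s : Finset α) (p : Finset α → Prop) [DecidablePred p]
    (f : Finset α → Finset (Finset α) → M) :
    ∑ P : Finpartition s, ∑ t ∈ P.parts with p t, f t (P.parts.erase t) =
      ∑ t ∈ s.powerset with t.Nonempty ∧ p t, ∑ Q : Finpartition (s \ t), f t Q.parts := by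
  rw [sum_sigma', sum_sigma']
  refine sum_bij'
    (fun x hx ↦ ⟨x.2, x.1.ofSubset (erase_subset x.2 _)
      (finpartition_sup_erase_parts x.1 (mem_filter.1 (mem_sigma.1 hx).2).1)⟩)
    (fun x hx ↦ ⟨x.2.extend (mem_filter.1 (mem_sigma.1 hx).1).2.1.ne_empty sdiff_disjoint
      (sdiff_union_of_subset (mem_powerset.1 (mem_filter.1 (mem_sigma.1 hx).1).1)), x.1⟩)
    ?_ ?_ ?_ ?_ (fun _ _ ↦ rfl)
  · rintro ⟨P, t⟩ h
    simp only [mem_sigma, mem_univ, mem_filter, mem_powerset, true_and, and_true] at h ⊢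
    exact ⟨P.subset h.1, P.nonempty_of_mem_parts h.1, h.2⟩
  · rintro ⟨t, Q⟩ h
    simp only [mem_sigma, mem_univ, mem_filter, true_and, and_true] at h ⊢
    exact ⟨mem_insert_self t Q.parts, h.2.2⟩
  · rintro ⟨P, t⟩ h
    have ht : t ∈ P.parts := (mem_filter.1 (mem_sigma.1 h).2).1
    exact Sigma.ext (Finpartition.ext (insert_erase ht)) HEq.rfl
  · rintro ⟨t, Q⟩ h
    have ht : t.Nonempty := (mem_filter.1 (mem_sigma.1 h).1).2.1
    have htQ : t ∉ Q.parts := fun hmem ↦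
      ht.ne_empty (sdiff_disjoint.symm.eq_bot_of_le (Q.le hmem))
    exact Sigma.ext rfl (heq_of_eq (Finpartition.ext (erase_insert htQ)))

theorem sum_powerset_filter_mem_sdiff (hy : y ∈ s) (f : Finset α → Finset α → M) :
    ∑ t ∈ s.powerset with y ∈ t, f t (s \ t) = ∑ t ∈ s.powerset with y ∉ t, f (s \ t) t := by
  refine sum_nbij' (s \ ·) (s \ ·) ?_ ?_ ?_ ?_ ?_ <;> simp +contextual [hy]

end Finset

section CommSemiring

variable {α R : Type*} [DecidableEq α] [CommSemiring R] {s : Finset α} {y : α}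

theorem sum_finpartition_prod_eq_sum_powerset (g : Finset α → R) (hy : y ∈ s) :
    ∑ P : Finpartition s, ∏ t ∈ P.parts, g t =
      ∑ t ∈ s.powerset with y ∈ t,
        g t * ∑ Q : Finpartition (s \ t), ∏ u ∈ Q.parts, g u := by
  have hsplit (P : Finpartition s) : ∏ t ∈ P.parts, g t =
      ∑ t ∈ P.parts with y ∈ t, g t * ∏ u ∈ P.parts.erase t, g u := by
    rw [finpartition_filter_mem_parts P hy, sum_singleton, mul_prod_erase _ _ (P.part_mem.2 hy)]
  have hfilter : {t ∈ s.powerset | t.Nonempty ∧ y ∈ t} = {t ∈ s.powerset | y ∈ t} :=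
    filter_congr fun t _ ↦ and_iff_right_of_imp fun hyt ↦ ⟨y, hyt⟩
  simp only [hsplit, mul_sum]
  rw [sum_finpartition_sum_parts_erase s (y ∈ ·) fun t S ↦ g t * ∏ u ∈ S, g u, hfilter]

theorem sum_finpartition_prod_eq_of_recurrence {g E : Finset α → R} (hempty : E ∅ = 1)
    (hrec : ∀ s, ∀ y ∈ s, ∑ t ∈ s.powerset with y ∈ t, g t * E (s \ t) = E s) (s : Finset α) :
    ∑ P : Finpartition s, ∏ t ∈ P.parts, g t = E s := by
  induction s using Finset.strongInduction with
  | H s ih =>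
    obtain rfl | ⟨y, hy⟩ := s.eq_empty_or_nonempty
    · exact (Fintype.sum_unique (ι := Finpartition (⊥ : Finset α)) _).trans hempty.symm
    · rw [sum_finpartition_prod_eq_sum_powerset g hy, ← hrec s y hy]
      refine sum_congr rfl fun t ht ↦ ?_
      obtain ⟨hts, hyt⟩ := mem_filter.1 ht
      rw [ih (s \ t) (sdiff_ssubset (mem_powerset.1 hts) ⟨y, hyt⟩)]

theorem sum_powerset_notMem_mul_sum_finpartition (c : ℕ → R) (G : Finset α → R) (hy : y ∈ s) :
    ∑ t ∈ s.powerset with t.Nonempty ∧ y ∉ t,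
        G t * ∑ Q : Finpartition (s \ t), c #Q.parts * ∏ u ∈ Q.parts, G u =
      ∑ P : Finpartition s,
        ((#P.parts - 1 : ℕ) : R) * c (#P.parts - 1) * ∏ t ∈ P.parts, G t := by
  simp only [mul_sum]
  rw [← sum_finpartition_sum_parts_erase s (y ∉ ·) fun t S ↦ G t * (c #S * ∏ u ∈ S, G u)]
  refine sum_congr rfl fun P _ ↦ ?_
  have hterm : ∀ t ∈ {t ∈ P.parts | y ∉ t},
      G t * (c #(P.parts.erase t) * ∏ u ∈ P.parts.erase t, G u) =
        c (#P.parts - 1) * ∏ u ∈ P.parts, G u := by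
    intro t ht
    have htP : t ∈ P.parts := (mem_filter.1 ht).1
    rw [card_erase_of_mem htP, mul_left_comm, mul_prod_erase _ _ htP]
  rw [sum_congr rfl hterm, sum_const, finpartition_card_filter_notMem_parts P hy, nsmul_eq_mul,
    mul_assoc]

end CommSemiring

section CommRing

/-- The coefficient `(-1)ⁿ⁻¹ (n - 1)!` of the partitions into `n` blocks in a cumulant, meaningful
for `n ≠ 0` only; the truncated subtraction gives the value `1` at `n = 0`. -/
def cumulantCoeff (A : Type*) [Ring A] (n : ℕ) : A :=
  (-1) ^ (n - 1) * ((n - 1).factorial : A)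

theorem cumulantCoeff_add_sub_one_mul (A : Type*) [Ring A] {n : ℕ} (hn : n ≠ 0) :
    cumulantCoeff A n + ((n - 1 : ℕ) : A) * cumulantCoeff A (n - 1) = if n = 1 then 1 else 0 := by
  obtain _ | _ | n := n
  · exact absurd rfl hn
  · simp [cumulantCoeff]
  · have hcomm : (n + 1 : A) * (-1) ^ n = (-1) ^ n * (n + 1) :=
      (n.cast_commute _).add_left (Commute.one_left _)
    simp [cumulantCoeff, Nat.factorial_succ, pow_succ, ← mul_assoc, hcomm]

variable {α A : Type*} [DecidableEq α] [CommRing A] {s : Finset α} {y : α}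

theorem cumulantOf_congr {G H : Finset α → A} (h : ∀ t, t.Nonempty → G t = H t) :
    cumulantOf G = cumulantOf H := by
  funext s
  refine sum_congr rfl fun P _ ↦ congrArg _ (prod_congr rfl fun t ht ↦ ?_)
  exact h t (P.nonempty_of_mem_parts ht)

theorem cumulantOf_eq_sum_cumulantCoeff (G : Finset α → A) (s : Finset α) :
    cumulantOf G s = ∑ P : Finpartition s, cumulantCoeff A #P.parts * ∏ t ∈ P.parts, G t :=
  rfl

theorem cumulantOf_add_sum_powerset_notMem (G : Finset α → A) (hy : y ∈ s) :
    cumulantOf G s + ∑ t ∈ s.powerset with t.Nonempty ∧ y ∉ t, G t * cumulantOf G (s \ t) =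
      G s := by
  have hs : s ≠ ⊥ := ne_empty_of_mem hy
  calc
    _ = ∑ P : Finpartition s, (cumulantCoeff A #P.parts +
          ((#P.parts - 1 : ℕ) : A) * cumulantCoeff A (#P.parts - 1)) * ∏ t ∈ P.parts, G t := by
      simp only [cumulantOf_eq_sum_cumulantCoeff, add_mul, sum_add_distrib]
      rw [sum_powerset_notMem_mul_sum_finpartition (cumulantCoeff A) G hy]
    _ = ∑ P : Finpartition s,
          if P = Finpartition.indiscrete hs then ∏ t ∈ P.parts, G t else 0 := by
      refine sum_congr rfl fun P _ ↦ ?_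
      rw [cumulantCoeff_add_sub_one_mul A (P.parts_nonempty hs).card_ne_zero, ite_mul, one_mul,
        zero_mul]
      exact if_congr (finpartition_card_parts_eq_one_iff hs) rfl rfl
    _ = G s := by
      rw [Fintype.sum_ite_eq', Finpartition.indiscrete_parts, prod_singleton]

theorem sum_powerset_mem_cumulantOf_mul {G : Finset α → A} (hG : G ∅ = 1) (hy : y ∈ s) :
    ∑ t ∈ s.powerset with y ∈ t, cumulantOf G t * G (s \ t) = G s := by
  have hempty : ∅ ∈ {t ∈ s.powerset | y ∉ t} := by simp
  have herase : {t ∈ s.powerset | y ∉ t}.erase ∅ = {t ∈ s.powerset | t.Nonempty ∧ y ∉ t} := by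
    ext t
    simp only [mem_erase, mem_filter, nonempty_iff_ne_empty]
    tauto
  rw [sum_powerset_filter_mem_sdiff hy fun t u ↦ cumulantOf G t * G u,
    ← add_sum_erase _ _ hempty, herase, sdiff_empty, hG, mul_one]
  simpa only [mul_comm (cumulantOf G _)] using cumulantOf_add_sum_powerset_notMem G hy

end CommRing

/-- **Lemma 1 of the paper (cluster expansion).** For every nonempty finite `Y ⊆ α`,
`∑_{P partition of Y} ∏_{X ∈ P} 𝔄(X) = G(Y)`, where `𝔄` is the cumulant of `G`. -/
theorem sum_partitions_prod_cumulant {α : Type*} [DecidableEq α] {A : Type*} [CommRing A]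
    (G : Finset α → A) (Y : Finset α) (hY : Y.Nonempty) :
    ∑ P : Finpartition Y, ∏ X ∈ P.parts, cumulantOf G X = G Y := by
  have hcongr : cumulantOf G = cumulantOf (Function.update G ∅ 1) :=
    cumulantOf_congr fun _ hX ↦ (Function.update_of_ne hX.ne_empty 1 G).symm
  have hempty : Function.update G ∅ 1 ∅ = 1 := Function.update_self ∅ 1 G
  calc
    _ = Function.update G ∅ 1 Y := by
      rw [hcongr]
      exact sum_finpartition_prod_eq_of_recurrence hempty
        (fun _ _ ↦ sum_powerset_mem_cumulantOf_mul hempty) Y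
    _ = G Y := Function.update_of_ne hY.ne_empty 1 G
end

section
/- Let A be a commutative ring, α a type, and 𝔄 a function from nonempty finite subsets of α to A. Define G(Y) := ∑_{P partition of Y} ∏_{X ∈ P} 𝔄(X) for every nonempty finite Y ⊆ α. Then for every nonempty finite Y ⊆ α, 𝔄(Y) = ∑_{P partition of Y} (−1)^{|P|−1}(|P|−1)! ∏_{X ∈ P} G(X). -/
open Finset in
/-- The cluster expansion `G(Y) = ∑_{P partition of Y} ∏_{X ∈ P} 𝔄(X)` built from a
function `𝔄` on (nonempty) finite subsets of `α` with values in a commutative ring. -/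
def clusterExpansionOf {α : Type*} [DecidableEq α] {A : Type*} [CommRing A]
    (𝔄 : Finset α → A) (Y : Finset α) : A :=
  ∑ P : Finpartition Y, ∏ X ∈ P.parts, 𝔄 X

/-!
Under the convolution `(f ⋆ g)(Y) = ∑_{X ⊆ Y} f(X) g(Y \ X)`, set functions behave like exponential
generating functions: the partition sum `∑_P c_{|P|} ∏_{X ∈ P} g(X)` plays the role of `F(g)` for
`F(t) = ∑ c_k t^k / k!`, so the cluster expansion is `G = exp 𝔄` and the claim is `𝔄 = log G`.
Restriction to the sets containing a fixed point `a` acts as a derivation `∂`, and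
`∂(log G) = ∂G ⋆ G⁻¹ = (∂𝔄 ⋆ G) ⋆ G⁻¹ = ∂𝔄`, where `G⁻¹` is the partition sum with coefficients
`(-1)^k k!`.
-/

open Finset

/-- The subset convolution of two set functions: the product of generating functions of labelled
structures, summing over all ordered splittings of a finite set into two disjoint pieces. -/
def subsetConvolution {α A : Type*} [DecidableEq α] [NonUnitalNonAssocSemiring A]
    (f g : Finset α → A) (Y : Finset α) : A :=
  ∑ X ∈ Y.powerset, f X * g (Y \ X)

local notation:70 f:70 "⋆" g:71 => subsetConvolution f g

section SubsetConvolution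

variable {α A : Type*} [DecidableEq α]

theorem subsetConvolution_assoc [NonUnitalSemiring A] (f g h : Finset α → A) :
    f ⋆ g ⋆ h = f ⋆ (g ⋆ h) := by
  funext Y
  simp only [subsetConvolution, sum_mul, mul_sum, mul_assoc]
  rw [sum_sigma', sum_sigma']
  refine sum_bij' (fun p _ => ⟨p.2, p.1 \ p.2⟩) (fun p _ => ⟨p.1 ∪ p.2, p.1⟩) ?_ ?_ ?_ ?_ ?_
  · grind
  · grind
  · rintro ⟨X, Z⟩ hXZ
    have hZX : Z ⊆ X := by grind
    simp only [union_sdiff_of_subset hZX]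
  · rintro ⟨Z, W⟩ hZW
    have hW : W ⊆ Y \ Z := by grind
    simp only [union_sdiff_cancel_left (disjoint_sdiff.mono_right hW)]
  · rintro ⟨X, Z⟩ hXZ
    have hZX : Z ⊆ X := by grind
    simp only [sdiff_sdiff_left, sup_eq_union, union_sdiff_of_subset hZX]

theorem add_subsetConvolution [NonUnitalNonAssocSemiring A] (f g h : Finset α → A) :
    (f + g) ⋆ h = f ⋆ h + g ⋆ h := by
  funext Y
  simp only [subsetConvolution, Pi.add_apply, add_mul, sum_add_distrib]

theorem single_empty_subsetConvolution [NonAssocSemiring A] (f : Finset α → A) :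
    Pi.single ∅ 1 ⋆ f = f := by
  funext Y
  simp [subsetConvolution, Pi.single_apply]

theorem subsetConvolution_single_empty [NonAssocSemiring A] (f : Finset α → A) :
    f ⋆ Pi.single ∅ 1 = f := by
  funext Y
  rw [subsetConvolution, sum_eq_single_of_mem Y (mem_powerset_self Y)]
  · simp
  · intro X hX hXY
    have hne : Y \ X ≠ ∅ := fun h =>
      hXY ((mem_powerset.1 hX).antisymm (sdiff_eq_empty_iff_subset.1 h))
    rw [Pi.single_eq_of_ne hne, mul_zero]

/-- The restriction of a set function to the sets containing `a`, extended by zero. It is the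
analogue of the operator `x_a ∂/∂x_a` on generating functions with one variable per element. -/
def pointing [Zero A] (a : α) (f : Finset α → A) (X : Finset α) : A :=
  if a ∈ X then f X else 0

end SubsetConvolution

section BlockRemoval

variable {α : Type*} [DecidableEq α] {X Y : Finset α}

theorem sup_erase_parts_eq_sdiff (P : Finpartition Y) (hX : X ∈ P.parts) :
    (P.parts.erase X).sup id = Y \ X := by
  ext x
  simp only [mem_sup, mem_erase, id, mem_sdiff]
  constructor
  · rintro ⟨Z, ⟨hZX, hZ⟩, hxZ⟩
    exact ⟨P.subset hZ hxZ, fun hxX => hZX (P.eq_of_mem_parts hZ hX hxZ hxX)⟩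
  · rintro ⟨hxY, hxX⟩
    obtain ⟨Z, hZ, hxZ⟩ := P.exists_mem hxY
    exact ⟨Z, ⟨by rintro rfl; exact hxX hxZ, hZ⟩, hxZ⟩

theorem sum_finpartition_parts_erase {M : Type*} [AddCommMonoid M] (hX : X.Nonempty) (hXY : X ⊆ Y)
    (f : Finset (Finset α) → M) :
    ∑ P : Finpartition Y with X ∈ P.parts, f (P.parts.erase X) =
      ∑ Q : Finpartition (Y \ X), f Q.parts := by
  have not_mem_parts (Q : Finpartition (Y \ X)) : X ∉ Q.parts := fun h =>
    hX.ne_empty (disjoint_self.1 (sdiff_disjoint.mono_left (Q.le h)))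
  refine sum_bij'
    (fun P hP => P.ofSubset (erase_subset X P.parts)
      (sup_erase_parts_eq_sdiff P (mem_filter.1 hP).2))
    (fun Q _ => Q.extend hX.ne_empty sdiff_disjoint (sdiff_union_of_subset hXY)) ?_ ?_ ?_ ?_ ?_
  · simp
  · simp
  · intro P hP
    ext1
    simp [insert_erase (mem_filter.1 hP).2]
  · intro Q _
    ext1
    simp [erase_insert (not_mem_parts Q)]
  · simp

end BlockRemoval

section PartitionSum

variable {α A : Type*} [DecidableEq α]

/-- The sum over partitions of `Y` of the product of `g` over the blocks, weighted by a coefficient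
`c` depending on the number of blocks. In terms of exponential generating functions this is the
composition of `∑ c k * t ^ k / k!` with `g`; the value `g ∅` is irrelevant. -/
def partitionSum [CommSemiring A] (c : ℕ → A) (g : Finset α → A) (Y : Finset α) : A :=
  ∑ P : Finpartition Y, c #P.parts * ∏ X ∈ P.parts, g X

theorem partitionSum_empty [CommSemiring A] (c : ℕ → A) (g : Finset α → A) :
    partitionSum c g ∅ = c 0 := by
  have hparts (P : Finpartition (∅ : Finset α)) : P.parts = ∅ :=
    Finpartition.parts_eq_empty_iff.2 rfl
  have : Unique (Finpartition (∅ : Finset α)) := inferInstanceAs (Unique (Finpartition ⊥))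
  simp [partitionSum, hparts]

theorem partitionSum_add [CommSemiring A] (c d : ℕ → A) (g : Finset α → A) :
    partitionSum (c + d) g = partitionSum c g + partitionSum d g := by
  funext Y
  simp only [partitionSum, Pi.add_apply, add_mul, sum_add_distrib]

theorem partitionSum_single_zero [CommSemiring A] (g : Finset α → A) :
    partitionSum (Pi.single 0 1) g = Pi.single ∅ 1 := by
  funext Y
  rcases Y.eq_empty_or_nonempty with rfl | hY
  · simp only [partitionSum_empty, Pi.single_eq_same]
  · rw [Pi.single_eq_of_ne hY.ne_empty]
    refine sum_eq_zero fun P _ => ?_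
    have hcard : #P.parts ≠ 0 := (card_pos.2 (P.parts_nonempty hY.ne_empty)).ne'
    rw [Pi.single_eq_of_ne hcard, zero_mul]

/-- A chain rule: if `partitionSum c g` is `F(g)`, then shifting `c` gives `F'(g)`. -/
theorem sum_finpartition_sum_weight_mul [CommSemiring A] (w : Finset α → A) (hw : w ∅ = 0)
    (c : ℕ → A) (g : Finset α → A) (Y : Finset α) :
    ∑ P : Finpartition Y, (∑ X ∈ P.parts, w X) * (c #P.parts * ∏ X ∈ P.parts, g X) =
      ((w * g) ⋆ partitionSum (fun k => c (k + 1)) g) Y := by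
  have split_block (P : Finpartition Y) (X : Finset α) (hX : X ∈ P.parts) :
      w X * (c #P.parts * ∏ Z ∈ P.parts, g Z) =
        (w * g) X * (c (#(P.parts.erase X) + 1) * ∏ Z ∈ P.parts.erase X, g Z) := by
    rw [card_erase_add_one hX, ← mul_prod_erase _ _ hX, Pi.mul_apply]
    ring
  calc
    _ = ∑ P : Finpartition Y, ∑ X ∈ P.parts,
          (w * g) X * (c (#(P.parts.erase X) + 1) * ∏ Z ∈ P.parts.erase X, g Z) := by
      simp only [sum_mul]
      exact sum_congr rfl fun P _ => sum_congr rfl (split_block P)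
    _ = ∑ X ∈ Y.powerset, ∑ P : Finpartition Y with X ∈ P.parts,
          (w * g) X * (c (#(P.parts.erase X) + 1) * ∏ Z ∈ P.parts.erase X, g Z) :=
      sum_comm' fun P X => by
        simpa using fun hX : X ∈ P.parts => P.subset hX
    _ = _ := by
      refine sum_congr rfl fun X hX => ?_
      rcases X.eq_empty_or_nonempty with rfl | hX'
      · simp [hw]
      · rw [← mul_sum, partitionSum, sum_finpartition_parts_erase hX' (mem_powerset.1 hX)
          (fun s => c (#s + 1) * ∏ Z ∈ s, g Z)]

theorem pointing_partitionSum [CommSemiring A] (a : α) (c : ℕ → A) (g : Finset α → A) :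
    pointing a (partitionSum c g) = pointing a g ⋆ partitionSum (fun k => c (k + 1)) g := by
  have sum_parts_mem (Y : Finset α) (P : Finpartition Y) :
      ∑ X ∈ P.parts, pointing a (1 : Finset α → A) X = pointing a 1 Y := by
    by_cases ha : a ∈ Y
    · obtain ⟨Z, hZ, haZ⟩ := P.exists_mem ha
      rw [sum_eq_single_of_mem Z hZ]
      · simp [pointing, ha, haZ]
      · exact fun X hX hXZ => if_neg fun haX => hXZ (P.eq_of_mem_parts hX hZ haX haZ)
    · rw [pointing, if_neg ha]
      exact sum_eq_zero fun X hX => if_neg fun haX => ha (P.subset hX haX)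
  have pointing_eq_mul (f : Finset α → A) : pointing a f = pointing a 1 * f := by
    funext X
    simp [pointing]
  funext Y
  rw [pointing_eq_mul g, ← sum_finpartition_sum_weight_mul _ (by simp [pointing])]
  simp only [sum_parts_mem, ← mul_sum]
  rw [pointing_eq_mul, Pi.mul_apply, partitionSum]

theorem partitionSum_natCast_mul [CommSemiring A] (c : ℕ → A) (g : Finset α → A) :
    partitionSum (fun k => k * c k) g =
      Function.update g ∅ 0 ⋆ partitionSum (fun k => c (k + 1)) g := by
  let w : Finset α → A := Function.update 1 ∅ 0
  have hw : w * g = Function.update g ∅ 0 := by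
    funext X
    by_cases hX : X = ∅ <;> simp [w, hX]
  have sum_weight (Y : Finset α) (P : Finpartition Y) : ∑ X ∈ P.parts, w X = #P.parts := by
    rw [card_eq_sum_ones, Nat.cast_sum]
    refine sum_congr rfl fun X hX => ?_
    simp [w, (P.nonempty_of_mem_parts hX).ne_empty]
  funext Y
  rw [← hw, ← sum_finpartition_sum_weight_mul w (by simp [w])]
  simp only [sum_weight, partitionSum, mul_assoc]

/-- `1 / (1 + t) = ∑ (-1) ^ k * k! * t ^ k / k!`, evaluated at `t = g - 1`. -/
theorem subsetConvolution_partitionSum_neg_one_pow_mul_factorial [CommRing A]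
    (g : Finset α → A) (hg : g ∅ = 1) :
    g ⋆ partitionSum (fun k => (-1) ^ k * (k.factorial : A)) g = Pi.single ∅ 1 := by
  have g_eq : g = Pi.single ∅ 1 + Function.update g ∅ 0 := by
    funext X
    by_cases hX : X = ∅ <;> simp [hX, hg]
  have coeff_eq : (fun k : ℕ => (-1) ^ k * (k.factorial : A)) +
      (fun k : ℕ => (k : A) * ((-1) ^ (k - 1) * ((k - 1).factorial : A))) = Pi.single 0 1 := by
    funext k
    cases k with
    | zero => simp
    | succ k =>
      simp only [Pi.add_apply, Nat.add_sub_cancel, Nat.factorial_succ, pow_succ, Nat.cast_mul,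
        Pi.single_eq_of_ne k.succ_ne_zero]
      ring
  set r := partitionSum (fun k => (-1) ^ k * (k.factorial : A)) g with hr
  calc
    g ⋆ r = r + Function.update g ∅ 0 ⋆ r := by
      conv_lhs => rw [g_eq]
      rw [add_subsetConvolution, single_empty_subsetConvolution]
    _ = r + partitionSum (fun k => k * ((-1) ^ (k - 1) * ((k - 1).factorial : A))) g := by
      rw [partitionSum_natCast_mul (fun k => (-1) ^ (k - 1) * ((k - 1).factorial : A))]
      rfl
    _ = Pi.single ∅ 1 := by
      rw [hr, ← partitionSum_add, coeff_eq, partitionSum_single_zero]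

theorem clusterExpansionOf_eq_partitionSum [CommRing A] (𝔄 : Finset α → A) :
    clusterExpansionOf 𝔄 = partitionSum 1 𝔄 := by
  funext Y
  simp only [clusterExpansionOf, partitionSum, Pi.one_apply, one_mul]

theorem clusterExpansionOf_empty [CommRing A] (𝔄 : Finset α → A) :
    clusterExpansionOf 𝔄 ∅ = 1 := by
  rw [clusterExpansionOf_eq_partitionSum, partitionSum_empty, Pi.one_apply]

theorem pointing_clusterExpansionOf [CommRing A] (a : α) (𝔄 : Finset α → A) :
    pointing a (clusterExpansionOf 𝔄) = pointing a 𝔄 ⋆ clusterExpansionOf 𝔄 := by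
  rw [clusterExpansionOf_eq_partitionSum]
  exact pointing_partitionSum a 1 𝔄

end PartitionSum

/-- **Lemma 1 of the paper (inversion direction).** If `G(Y) = ∑_{P partition of Y}
∏_{X ∈ P} 𝔄(X)`, then for every nonempty finite `Y ⊆ α` the cumulants are recovered by
`𝔄(Y) = ∑_{P partition of Y} (−1)^{|P|−1} (|P|−1)! ∏_{X ∈ P} G(X)`. -/
theorem cumulant_eq_sum_partitions_clusterExpansion {α : Type*} [DecidableEq α]
    {A : Type*} [CommRing A] (𝔄 : Finset α → A) (Y : Finset α) (hY : Y.Nonempty) :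
    𝔄 Y =
      ∑ P : Finpartition Y,
        (-1 : A) ^ (P.parts.card - 1) * (Nat.factorial (P.parts.card - 1) : A) *
          ∏ X ∈ P.parts, clusterExpansionOf 𝔄 X := by
  obtain ⟨a, ha⟩ := hY
  let G := clusterExpansionOf 𝔄
  let invG := partitionSum (fun k => (-1) ^ k * (k.factorial : A)) G
  let logG := partitionSum (fun k => (-1) ^ (k - 1) * ((k - 1).factorial : A)) G
  have G_mul_invG : G ⋆ invG = Pi.single ∅ 1 :=
    subsetConvolution_partitionSum_neg_one_pow_mul_factorial G (clusterExpansionOf_empty 𝔄)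
  have pointing_logG : pointing a logG = pointing a G ⋆ invG := pointing_partitionSum a _ G
  have pointing_eq : pointing a 𝔄 = pointing a logG := by
    rw [pointing_logG, pointing_clusterExpansionOf, subsetConvolution_assoc, G_mul_invG,
      subsetConvolution_single_empty]
  calc
    𝔄 Y = pointing a 𝔄 Y := (if_pos ha).symm
    _ = pointing a logG Y := congrFun pointing_eq Y
    _ = logG Y := if_pos ha
end

section
/- Let M be an additive commutative group, Y a finite set, and X_1, …, X_m (m ≥ 2) a partition of Y into nonempty pairwise disjoint blocks. For each nonempty Z ⊆ Y let M(Z) ∈ M. Then ∑_{Q partition of {1,…,m}} (−1)^{|Q|−1}(|Q|−1)! ∑_{q ∈ Q} ∑_{∅ ≠ Z ⊆ ⋃_{i ∈ q} X_i} M(Z) = ∑_{Z ⊆ Y, Z ∩ X_i ≠ ∅ for every i = 1,…,m} M(Z). -/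
/-!
Marking a block `q` of a partition of `s` leaves an arbitrary partition of `s \ q`. Since
`∑ (-1)^|P| |P|!` over the partitions `P` of a finite set `u` is `(-1)^|u|`, the weighted sum over
partitions of a block sum `∑ q ∈ Q, h q` collapses to the alternating sum
`∑ (-1)^|s \ q| h q` over the nonempty `q ⊆ s`. For `h q = ∑_{∅ ≠ Z ⊆ ⋃_{i ∈ q} X_i} M Z` this is
inclusion–exclusion on the set of indices `i` whose `X_i` meets `Z`.
-/

open Finset

theorem parts_avoid_of_mem {α : Type*} [GeneralizedBooleanAlgebra α] [DecidableEq α] {a b : α}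
    (P : Finpartition a) (hb : b ∈ P.parts) : (P.avoid b).parts = P.parts.erase b := by
  have sdiff_eq {d : α} (hd : d ∈ P.parts) (hdb : d ≠ b) : d \ b = d :=
    (P.disjoint hd hb hdb).sdiff_eq_left
  ext c
  rw [Finpartition.mem_avoid, mem_erase]
  constructor
  · rintro ⟨d, hd, hdb, rfl⟩
    have hne : d ≠ b := fun h => hdb h.le
    rw [sdiff_eq hd hne]
    exact ⟨hne, hd⟩
  · rintro ⟨hne, hc⟩
    have hcb : ¬c ≤ b := fun h => P.ne_bot hc ((P.disjoint hc hb hne).eq_bot_of_le h)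
    exact ⟨c, hc, hcb, sdiff_eq hc hne⟩

theorem subset_biUnion_iff_filter_inter_nonempty_subset {ι α : Type*} [DecidableEq α]
    {s q : Finset ι} {X : ι → Finset α} (hX : (s : Set ι).PairwiseDisjoint X)
    (hq : q ⊆ s) {Z : Finset α} (hZ : Z ⊆ s.biUnion X) :
    Z ⊆ q.biUnion X ↔ {i ∈ s | (Z ∩ X i).Nonempty} ⊆ q := by
  constructor
  · intro hZq i hi
    obtain ⟨his, x, hx⟩ := mem_filter.1 hi
    obtain ⟨hxZ, hxi⟩ := mem_inter.1 hx
    obtain ⟨k, hk, hxk⟩ := mem_biUnion.1 (hZq hxZ)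
    rwa [hX.elim_finset his (hq hk) x hxi hxk]
  · intro hsub x hx
    obtain ⟨k, hk, hxk⟩ := mem_biUnion.1 (hZ hx)
    exact mem_biUnion.2 ⟨k, hsub (mem_filter.2 ⟨hk, x, mem_inter.2 ⟨hx, hxk⟩⟩), hxk⟩

section

variable {ι : Type*} [DecidableEq ι]

theorem sum_finpartition_sum_parts {N : Type*} [AddCommMonoid N] (s : Finset ι)
    (F : Finset ι → Finset (Finset ι) → N) :
    ∑ Q : Finpartition s, ∑ q ∈ Q.parts, F q (Q.parts.erase q) =
      ∑ q ∈ Ioc ∅ s, ∑ P : Finpartition (s \ q), F q P.parts := by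
  have q_notMem {q : Finset ι} (hq : q ∈ Ioc ∅ s) (P : Finpartition (s \ q)) : q ∉ P.parts :=
    fun h => (mem_Ioc.1 hq).1.ne' (disjoint_sdiff.eq_bot_of_le (P.subset h))
  rw [sum_sigma', sum_sigma']
  refine sum_bij' (fun x _ => ⟨x.2, x.1.avoid x.2⟩)
    (fun y hy => ⟨y.2.extend (mem_Ioc.1 (mem_sigma.1 hy).1).1.ne' sdiff_disjoint
      (sdiff_union_of_subset (mem_Ioc.1 (mem_sigma.1 hy).1).2), y.1⟩) ?_ ?_ ?_ ?_ ?_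
  · rintro ⟨Q, q⟩ hx
    have hq : q ∈ Q.parts := (mem_sigma.1 hx).2
    exact mem_sigma.2
      ⟨mem_Ioc.2 ⟨(Q.nonempty_of_mem_parts hq).empty_ssubset, Q.subset hq⟩, mem_univ _⟩
  · rintro ⟨q, P⟩ -
    exact mem_sigma.2 ⟨mem_univ _, mem_insert_self q P.parts⟩
  · rintro ⟨Q, q⟩ hx
    have hq : q ∈ Q.parts := (mem_sigma.1 hx).2
    refine Sigma.ext (Finpartition.ext ?_) HEq.rfl
    rw [Finpartition.extend_parts, parts_avoid_of_mem Q hq, insert_erase hq]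
  · rintro ⟨q, P⟩ hy
    refine Sigma.ext rfl (heq_of_eq (Finpartition.ext ?_))
    rw [parts_avoid_of_mem _ (mem_insert_self q P.parts), Finpartition.extend_parts,
      erase_insert (q_notMem (mem_sigma.1 hy).1 P)]
  · rintro ⟨Q, q⟩ hx
    rw [parts_avoid_of_mem Q (mem_sigma.1 hx).2]

theorem sum_Icc_neg_one_pow_card_sdiff (t s : Finset ι) :
    ∑ q ∈ Icc t s, (-1 : ℤ) ^ #(s \ q) = if t = s then 1 else 0 := by
  by_cases hts : t ⊆ s
  · calc
      ∑ q ∈ Icc t s, (-1 : ℤ) ^ #(s \ q) = ∑ u ∈ (s \ t).powerset, (-1 : ℤ) ^ #u := by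
        refine sum_nbij' (s \ ·) (s \ ·) ?_ ?_ ?_ ?_ fun _ _ => rfl <;> grind
      _ = if t = s then 1 else 0 := by
        rw [sum_powerset_neg_one_pow_card]
        exact if_congr (sdiff_eq_empty_iff_subset.trans ⟨hts.antisymm, fun h => h.ge⟩) rfl rfl
  · rw [Icc_eq_empty hts, sum_empty, if_neg fun h => hts h.le]

theorem sum_Ioc_empty_neg_one_pow_card_sdiff {s : Finset ι} (hs : s.Nonempty) :
    ∑ q ∈ Ioc ∅ s, (-1 : ℤ) ^ #(s \ q) = -(-1) ^ #s := by
  have h := sum_Icc_neg_one_pow_card_sdiff ∅ s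
  rw [if_neg hs.ne_empty.symm, ← add_sum_Ioc_eq_sum_Icc (empty_subset s), sdiff_empty] at h
  exact eq_neg_of_add_eq_zero_right h

theorem sum_finpartition_neg_one_pow_mul_factorial (s : Finset ι) :
    ∑ P : Finpartition s, (-1 : ℤ) ^ #P.parts * (#P.parts).factorial = (-1) ^ #s := by
  induction s using Finset.strongInduction with
  | H s ih =>
    obtain rfl | hs := s.eq_empty_or_nonempty
    · exact Fintype.sum_unique (ι := Finpartition (⊥ : Finset ι)) _
    -- In `n! = n * (n - 1)!` with `n = #P.parts`, the factor `n` counts the choices of a block.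
    have mark_block (P : Finpartition s) : (-1 : ℤ) ^ #P.parts * (#P.parts).factorial =
        -∑ q ∈ P.parts, (-1 : ℤ) ^ #(P.parts.erase q) * (#(P.parts.erase q)).factorial := by
      obtain ⟨k, hk⟩ := Nat.exists_eq_add_one.2 (P.parts_nonempty hs.ne_empty).card_pos
      rw [sum_congr rfl fun q hq => by rw [card_erase_of_mem hq], sum_const, hk,
        add_tsub_cancel_right, Nat.factorial_succ, nsmul_eq_mul]
      push_cast
      ring
    calc
      ∑ P : Finpartition s, (-1 : ℤ) ^ #P.parts * (#P.parts).factorial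
        = -∑ q ∈ Ioc ∅ s, ∑ P : Finpartition (s \ q),
            (-1) ^ #P.parts * ((#P.parts).factorial : ℤ) := by
          rw [sum_congr rfl fun P _ => mark_block P, sum_neg_distrib,
            sum_finpartition_sum_parts s fun _ p => (-1 : ℤ) ^ #p * (#p).factorial]
      _ = -∑ q ∈ Ioc ∅ s, (-1) ^ #(s \ q) := by
          congr 1
          refine sum_congr rfl fun q hq => ih _ ?_
          obtain ⟨hq, hqs⟩ := mem_Ioc.1 hq
          exact sdiff_ssubset hqs (nonempty_iff_ne_empty.2 hq.ne')
      _ = (-1) ^ #s := by rw [sum_Ioc_empty_neg_one_pow_card_sdiff hs, neg_neg]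

variable {G : Type*} [AddCommGroup G]

theorem sum_finpartition_smul_sum_parts (s : Finset ι) (h : Finset ι → G) :
    ∑ Q : Finpartition s,
        ((-1 : ℤ) ^ (#Q.parts - 1) * (#Q.parts - 1).factorial) • ∑ q ∈ Q.parts, h q =
      ∑ q ∈ Ioc ∅ s, (-1 : ℤ) ^ #(s \ q) • h q :=
  calc
    _ = ∑ Q : Finpartition s, ∑ q ∈ Q.parts,
          ((-1 : ℤ) ^ #(Q.parts.erase q) * (#(Q.parts.erase q)).factorial) • h q := by
        refine sum_congr rfl fun Q _ => ?_
        rw [smul_sum]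
        exact sum_congr rfl fun q hq => by rw [card_erase_of_mem hq]
    _ = ∑ q ∈ Ioc ∅ s, ∑ P : Finpartition (s \ q),
          ((-1 : ℤ) ^ #P.parts * (#P.parts).factorial) • h q :=
        sum_finpartition_sum_parts s fun q p => ((-1 : ℤ) ^ #p * (#p).factorial) • h q
    _ = ∑ q ∈ Ioc ∅ s, (-1 : ℤ) ^ #(s \ q) • h q := by
        simp_rw [← sum_smul, sum_finpartition_neg_one_pow_mul_factorial]

theorem sum_Icc_neg_one_pow_smul_sum_filter_subset {β : Type*} (t s : Finset ι) (A : Finset β)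
    (σ : β → Finset ι) (f : β → G) (hσ : ∀ b ∈ A, t ⊆ σ b) :
    ∑ q ∈ Icc t s, (-1 : ℤ) ^ #(s \ q) • ∑ b ∈ A with σ b ⊆ q, f b =
      ∑ b ∈ A with σ b = s, f b :=
  calc
    _ = ∑ b ∈ A, ∑ q ∈ Icc (σ b) s, (-1 : ℤ) ^ #(s \ q) • f b := by
        simp_rw [smul_sum]
        refine sum_comm' fun q b => ?_
        rw [mem_filter, mem_Icc, mem_Icc]
        exact ⟨fun ⟨⟨_, hqs⟩, hb, hbq⟩ => ⟨⟨hbq, hqs⟩, hb⟩,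
          fun ⟨⟨hbq, hqs⟩, hb⟩ => ⟨⟨(hσ b hb).trans hbq, hqs⟩, hb, hbq⟩⟩
    _ = ∑ b ∈ A with σ b = s, f b := by
        simp_rw [← sum_smul, sum_Icc_neg_one_pow_card_sdiff, ite_smul, one_smul, zero_smul,
          sum_filter]

theorem sum_finpartition_smul_sum_parts_sum_filter_subset {β : Type*} (s : Finset ι)
    (A : Finset β) (σ : β → Finset ι) (f : β → G) (hσ : ∀ b ∈ A, (σ b).Nonempty) :
    ∑ Q : Finpartition s, ((-1 : ℤ) ^ (#Q.parts - 1) * (#Q.parts - 1).factorial) •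
        ∑ q ∈ Q.parts, ∑ b ∈ A with σ b ⊆ q, f b =
      ∑ b ∈ A with σ b = s, f b := by
  have empty_term : ∑ b ∈ A with σ b ⊆ ∅, f b = 0 := by
    rw [filter_false_of_mem fun b hb h => (hσ b hb).ne_empty (subset_empty.1 h), sum_empty]
  rw [sum_finpartition_smul_sum_parts,
    ← sum_Icc_neg_one_pow_smul_sum_filter_subset ∅ s A σ f fun _ _ => empty_subset _,
    ← add_sum_Ioc_eq_sum_Icc (empty_subset s), empty_term, smul_zero, zero_add]

theorem sum_partitions_blocks_signed_eq_sum_meeting_all_blocks_general {α : Type*}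
    [DecidableEq α] {s : Finset ι} (hs : s.Nonempty) {X : ι → Finset α}
    (hX : (s : Set ι).PairwiseDisjoint X) (M : Finset α → G) :
    ∑ Q : Finpartition s, ((-1 : ℤ) ^ (#Q.parts - 1) * (#Q.parts - 1).factorial) •
        ∑ q ∈ Q.parts, ∑ Z ∈ (q.biUnion X).powerset with Z ≠ ∅, M Z =
      ∑ Z ∈ (s.biUnion X).powerset with ∀ i ∈ s, (Z ∩ X i).Nonempty, M Z := by
  let A : Finset (Finset α) := {Z ∈ (s.biUnion X).powerset | Z ≠ ∅}
  let σ (Z : Finset α) : Finset ι := {i ∈ s | (Z ∩ X i).Nonempty}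
  have subset_biUnion_iff {q : Finset ι} {Z : Finset α} (hq : q ⊆ s)
      (hZ : Z ⊆ s.biUnion X) : Z ⊆ q.biUnion X ↔ σ Z ⊆ q :=
    subset_biUnion_iff_filter_inter_nonempty_subset hX hq hZ
  have σ_nonempty (Z) (hZ : Z ∈ A) : (σ Z).Nonempty := by
    obtain ⟨hZY, hZ⟩ := mem_filter.1 hZ
    contrapose! hZ
    simpa using (subset_biUnion_iff (empty_subset s) (mem_powerset.1 hZY)).2 hZ.le
  have nonempty_subsets {q : Finset ι} (hq : q ⊆ s) :
      {Z ∈ (q.biUnion X).powerset | Z ≠ ∅} = {Z ∈ A | σ Z ⊆ q} := by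
    have := biUnion_subset_biUnion_of_subset_left X hq
    grind
  have meeting_all :
      {Z ∈ (s.biUnion X).powerset | ∀ i ∈ s, (Z ∩ X i).Nonempty} = {Z ∈ A | σ Z = s} := by
    obtain ⟨i, hi⟩ := hs
    grind
  rw [meeting_all, ← sum_finpartition_smul_sum_parts_sum_filter_subset s A σ M σ_nonempty]
  refine sum_congr rfl fun Q _ => congrArg _ (sum_congr rfl fun q hq => ?_)
  rw [nonempty_subsets (Q.subset hq)]

end

/-- **Identity behind formulas (6)–(7) of the paper.** Let `X_1, …, X_m` (`m ≥ 2`) be a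
partition of the finite set `Y` into nonempty pairwise disjoint blocks and let `M(Z)` be
elements of an additive commutative group given for the nonempty subsets `Z ⊆ Y`. Then
`∑_{Q partition of {1,…,m}} (−1)^{|Q|−1}(|Q|−1)! ∑_{q ∈ Q} ∑_{∅ ≠ Z ⊆ ⋃_{i ∈ q} X_i} M(Z)`
equals the sum of `M(Z)` over the subsets `Z ⊆ Y` meeting every block `X_i`. -/
theorem sum_partitions_blocks_signed_eq_sum_meeting_all_blocks {α : Type*} [DecidableEq α]
    {G : Type*} [AddCommGroup G] (Y : Finset α) (m : ℕ) (hm : 2 ≤ m)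
    (X : Fin m → Finset α) (hne : ∀ i, (X i).Nonempty)
    (hdisj : ∀ i j, i ≠ j → Disjoint (X i) (X j))
    (hY : Finset.univ.biUnion X = Y) (M : Finset α → G) :
    ∑ Q : Finpartition (Finset.univ : Finset (Fin m)),
        ((-1 : ℤ) ^ (Q.parts.card - 1) * (Nat.factorial (Q.parts.card - 1) : ℤ)) •
          ∑ q ∈ Q.parts, ∑ Z ∈ (q.biUnion X).powerset.filter (fun Z => Z ≠ ∅), M Z =
      ∑ Z ∈ Y.powerset.filter (fun Z => ∀ i, (Z ∩ X i).Nonempty), M Z := by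
  subst hY
  simpa using sum_partitions_blocks_signed_eq_sum_meeting_all_blocks_general
    (univ_nonempty_iff.2 ⟨⟨0, by lia⟩⟩) (fun i _ j _ => hdisj i j) M
end

section
/- For every n ≥ 1 and every real number c ≥ 1, ∑_{P partition of an n-element set} c^{|P|} ∑_{Q partition of the set of blocks of P} (|Q|−1)! ≤ n! · e^{2n+1} · c^n. -/
/-!
A partition of `insert a s` is a partition `P` of `s` together with a choice of where `a` goes: into
one of the `#P.parts` blocks, or into a new block. This expresses `∑ f #P.parts` over partitions of
`insert a s` as `∑ (f (#P.parts + 1) + #P.parts • f #P.parts)` over partitions of `s`. For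
`f k = k! x ^ k`, the bound `#P.parts ≤ #s` gives `∑ #P.parts! x ^ #P.parts ≤ (#s)! (1 + x) ^ #s`
by induction. As `(#Q.parts - 1)! ≤ #Q.parts!`, the case `x = 1` bounds the inner sum by
`#P.parts! 2 ^ #P.parts`, and then the case `x = 2`, with `c ^ #P.parts ≤ c ^ n`, bounds the double
sum by `n! 3 ^ n c ^ n`, where `3 ≤ e ^ 2`.
-/

open Finset
open scoped Nat

section Recurrence

variable {α : Type*} [DecidableEq α] {a : α} {s t : Finset α}

theorem subset_of_mem_insert_empty_parts (P : Finpartition s) (ht : t ∈ insert ∅ P.parts) :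
    t ⊆ s := by
  obtain rfl | ht := mem_insert.1 ht
  · exact empty_subset s
  · exact P.subset ht

/-- The partition of `insert a s` obtained from a partition `P` of `s` by adding `a` to the block
`t` of `P`, or as a new block `{a}` when `t = ∅`. -/
def insertIntoPart (P : Finpartition s) (ha : a ∉ s) (ht : t ∈ insert ∅ P.parts) :
    Finpartition (insert a s) :=
  .ofExistsUnique (insert (insert a t) (P.parts.erase t))
    (by
      have hsub : ∀ u ∈ P.parts, u ⊆ s := fun _ ↦ P.subset
      grind)
    (by
      have hsub : ∀ u ∈ P.parts, u ⊆ s := fun _ ↦ P.subset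
      have huniq : ∀ u ∈ P.parts, ∀ v ∈ P.parts, ∀ x ∈ u, x ∈ v → u = v :=
        fun u hu v hv x ↦ P.eq_of_mem_parts hu hv
      have hex : ∀ x ∈ s, ∃ u ∈ P.parts, x ∈ u := fun _ ↦ P.exists_mem
      intro x hx
      by_cases hxt : x ∈ insert a t
      · exact ⟨insert a t, by grind, by grind⟩
      · obtain ⟨u, hu, hxu⟩ := hex x (by grind)
        exact ⟨u, by grind, by grind⟩)
    (fun h ↦ (mem_insert.1 h).elim (insert_ne_empty a t).symm
      fun h ↦ P.empty_notMem_parts (mem_of_mem_erase h))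

theorem parts_insertIntoPart (P : Finpartition s) (ha : a ∉ s) (ht : t ∈ insert ∅ P.parts) :
    (insertIntoPart P ha ht).parts = insert (insert a t) (P.parts.erase t) :=
  rfl

theorem card_parts_insertIntoPart (P : Finpartition s) (ha : a ∉ s) (ht : t ∈ insert ∅ P.parts) :
    #(insertIntoPart P ha ht).parts = if t = ∅ then #P.parts + 1 else #P.parts := by
  have hnew : insert a t ∉ P.parts.erase t := fun h ↦
    ha (P.subset (mem_of_mem_erase h) (mem_insert_self a t))
  have hempty := P.empty_notMem_parts
  rw [parts_insertIntoPart, card_insert_of_notMem hnew]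
  split_ifs with h
  · rw [h, erase_eq_of_notMem hempty]
  · exact card_erase_add_one (by grind)

theorem part_insertIntoPart (P : Finpartition s) (ha : a ∉ s) (ht : t ∈ insert ∅ P.parts) :
    (insertIntoPart P ha ht).part a = insert a t :=
  Finpartition.part_eq_of_mem _ (mem_insert_self _ _) (mem_insert_self a t)

theorem restrict_insertIntoPart (P : Finpartition s) (ha : a ∉ s) (ht : t ∈ insert ∅ P.parts) :
    (insertIntoPart P ha ht).restrict (subset_insert a s) = P := by
  have hmeet : (P.parts.erase t).image (· ∩ s) = P.parts.erase t := by
    refine (image_congr fun u hu ↦ ?_).trans image_id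
    exact inter_eq_left.2 (P.subset (mem_of_mem_erase hu))
  have hempty := P.empty_notMem_parts
  refine Finpartition.ext ?_
  change ((insert (insert a t) (P.parts.erase t)).image (· ∩ s)).erase ∅ = P.parts
  rw [image_insert, hmeet, insert_inter_of_notMem ha,
    inter_eq_left.2 (subset_of_mem_insert_empty_parts P ht)]
  grind

theorem parts_restrict_subset_insert (ha : a ∉ s) (P : Finpartition (insert a s)) :
    (P.restrict (subset_insert a s)).parts =
      (insert ((P.part a).erase a) (P.parts.erase (P.part a))).erase ∅ := by
  have hpart : P.part a ∈ P.parts := P.part_mem.2 (mem_insert_self a s)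
  have hmeet {u : Finset α} (hu : u ∈ P.parts) : u ∩ s = u.erase a := by
    rw [← erase_insert ha, inter_erase, inter_eq_left.2 (P.subset hu)]
  have hother : (P.parts.erase (P.part a)).image (· ∩ s) = P.parts.erase (P.part a) := by
    refine (image_congr fun u hu ↦ ?_).trans image_id
    obtain ⟨hne, hu⟩ := mem_erase.1 hu
    exact (hmeet hu).trans (erase_eq_of_notMem fun hau ↦ hne (P.part_eq_of_mem hu hau).symm)
  change (P.parts.image (· ∩ s)).erase ∅ = _
  rw [← insert_erase hpart, image_insert, hmeet hpart, hother, insert_erase hpart]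

theorem erase_part_mem_restrict (ha : a ∉ s) (P : Finpartition (insert a s)) :
    (P.part a).erase a ∈ insert ∅ (P.restrict (subset_insert a s)).parts := by
  rw [parts_restrict_subset_insert ha]
  grind

theorem insertIntoPart_restrict (ha : a ∉ s) (P : Finpartition (insert a s)) :
    insertIntoPart (P.restrict (subset_insert a s)) ha (erase_part_mem_restrict ha P) = P := by
  have hpart : P.part a ∈ P.parts := P.part_mem.2 (mem_insert_self a s)
  have hmem : a ∈ P.part a := P.mem_part_self.2 (mem_insert_self a s)
  have hrest : (P.part a).erase a ∉ P.parts := by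
    intro h
    obtain ⟨x, hx⟩ := P.nonempty_of_mem_parts h
    have heq : (P.part a).erase a = P.part a := P.eq_of_mem_parts h hpart hx (mem_of_mem_erase hx)
    exact erase_eq_self.1 heq hmem
  have hempty := P.empty_notMem_parts
  refine Finpartition.ext ?_
  rw [parts_insertIntoPart, parts_restrict_subset_insert ha, insert_erase hmem]
  grind

theorem sum_finpartition_insert {M : Type*} [AddCommMonoid M] (ha : a ∉ s) (f : ℕ → M) :
    ∑ P : Finpartition (insert a s), f #P.parts =
      ∑ P : Finpartition s, (f (#P.parts + 1) + #P.parts • f #P.parts) := by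
  calc ∑ P : Finpartition (insert a s), f #P.parts
      = ∑ x ∈ (univ : Finset (Finpartition s)).sigma fun P ↦ insert ∅ P.parts,
          f (if x.2 = ∅ then #x.1.parts + 1 else #x.1.parts) := by
        symm
        refine sum_bij' (fun x hx ↦ insertIntoPart x.1 ha (mem_sigma.1 hx).2)
          (fun P _ ↦ ⟨P.restrict (subset_insert a s), (P.part a).erase a⟩)
          (fun _ _ ↦ mem_univ _)
          (fun P _ ↦ mem_sigma.2 ⟨mem_univ _, erase_part_mem_restrict ha P⟩) ?_
          (fun P _ ↦ insertIntoPart_restrict ha P) ?_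
        · rintro ⟨P, t⟩ hx
          have hat : a ∉ t := fun hat ↦
            ha (subset_of_mem_insert_empty_parts P (mem_sigma.1 hx).2 hat)
          simp only [restrict_insertIntoPart, part_insertIntoPart, erase_insert hat]
        · rintro ⟨P, t⟩ hx
          rw [card_parts_insertIntoPart]
    _ = ∑ P : Finpartition s, (f (#P.parts + 1) + #P.parts • f #P.parts) := by
        rw [sum_sigma]
        refine sum_congr rfl fun P _ ↦ ?_
        rw [sum_insert P.empty_notMem_parts, if_pos rfl, ← sum_const]
        exact congrArg _ (sum_congr rfl fun t ht ↦ by rw [if_neg (P.ne_empty ht)])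

end Recurrence

section Bounds

variable {α : Type*} [DecidableEq α] {R : Type*} [CommSemiring R] [PartialOrder R]
  [IsOrderedRing R]

theorem sum_factorial_mul_pow_le (s : Finset α) {x : R} (hx : 0 ≤ x) :
    ∑ P : Finpartition s, ((#P.parts)! : R) * x ^ #P.parts ≤ (#s)! * (1 + x) ^ #s := by
  induction s using Finset.induction_on with
  | empty =>
    have : Unique (Finpartition (∅ : Finset α)) :=
      inferInstanceAs (Unique (Finpartition (⊥ : Finset α)))
    have hempty (P : Finpartition (∅ : Finset α)) : P.parts = ∅ :=
      Finpartition.parts_eq_empty_iff.2 rfl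
    simp [hempty]
  | insert a s ha ih =>
    rw [sum_finpartition_insert ha fun k ↦ (k ! : R) * x ^ k, card_insert_of_notMem ha]
    calc ∑ P : Finpartition s, (((#P.parts + 1)! : R) * x ^ (#P.parts + 1) +
            #P.parts • (((#P.parts)! : R) * x ^ #P.parts))
        = ∑ P : Finpartition s, ((#P.parts + 1 : ℕ) * x + #P.parts) *
            (((#P.parts)! : R) * x ^ #P.parts) := by
          refine sum_congr rfl fun P _ ↦ ?_
          rw [Nat.factorial_succ, nsmul_eq_mul]
          push_cast
          ring
      _ ≤ ∑ P : Finpartition s, ((#s + 1 : ℕ) * x + (#s + 1 : ℕ)) *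
            (((#P.parts)! : R) * x ^ #P.parts) := by
          gcongr with P
          · exact P.card_parts_le_card
          · exact P.card_parts_le_card.trans (Nat.le_succ _)
      _ = (#s + 1 : ℕ) * (1 + x) *
            ∑ P : Finpartition s, ((#P.parts)! : R) * x ^ #P.parts := by
          rw [← mul_sum]
          ring
      _ ≤ (#s + 1 : ℕ) * (1 + x) * ((#s)! * (1 + x) ^ #s) := by
          have := add_nonneg zero_le_one hx
          gcongr
      _ = (#s + 1)! * (1 + x) ^ (#s + 1) := by
          rw [Nat.factorial_succ]
          push_cast
          ring

theorem sum_partitions_pow_sum_partitions_factorial_le_general (s : Finset α) {c : R}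
    (hc : 1 ≤ c) :
    ∑ P : Finpartition s, c ^ #P.parts * ∑ Q : Finpartition P.parts, ((#Q.parts)! : R) ≤
      (#s)! * (3 * c) ^ #s := by
  have hc₀ : 0 ≤ c := zero_le_one.trans hc
  have hinner (P : Finpartition s) :
      ∑ Q : Finpartition P.parts, ((#Q.parts)! : R) ≤ (#P.parts)! * 2 ^ #P.parts := by
    simpa [one_add_one_eq_two] using sum_factorial_mul_pow_le P.parts (zero_le_one (α := R))
  calc ∑ P : Finpartition s, c ^ #P.parts * ∑ Q : Finpartition P.parts, ((#Q.parts)! : R)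
      ≤ ∑ P : Finpartition s, c ^ #s * ((#P.parts)! * 2 ^ #P.parts) := by
        gcongr with P
        · exact P.card_parts_le_card
        · exact hinner P
    _ ≤ c ^ #s * ((#s)! * (1 + 2) ^ #s) := by
        rw [← mul_sum]
        gcongr
        exact sum_factorial_mul_pow_le s zero_le_two
    _ = (#s)! * (3 * c) ^ #s := by
        rw [mul_pow]
        ring

end Bounds

theorem three_pow_le_exp (n : ℕ) : (3 : ℝ) ^ n ≤ Real.exp (2 * n) := by
  rw [mul_comm, Real.exp_nat_mul]
  gcongr
  linarith [Real.add_one_le_exp (2 : ℝ)]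

/-- **Counting estimate (20) in the proof of Theorem 2 of the paper.** For every `n ≥ 1`
and every real `c ≥ 1`,
`∑_{P partition of an n-element set} c^{|P|} ∑_{Q partition of the blocks of P} (|Q|−1)!`
is at most `n! e^{2n+1} c^n`. -/
theorem sum_partitions_pow_sum_partitions_factorial_le (n : ℕ) (hn : 1 ≤ n)
    (c : ℝ) (hc : 1 ≤ c) :
    ∑ P : Finpartition (Finset.univ : Finset (Fin n)),
        c ^ P.parts.card *
          ∑ Q : Finpartition P.parts, ((Nat.factorial (Q.parts.card - 1) : ℝ)) ≤
      (Nat.factorial n : ℝ) * Real.exp (2 * n + 1) * c ^ n := by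
  calc ∑ P : Finpartition (univ : Finset (Fin n)),
        c ^ #P.parts * ∑ Q : Finpartition P.parts, ((#Q.parts - 1)! : ℝ)
      ≤ ∑ P : Finpartition (univ : Finset (Fin n)),
          c ^ #P.parts * ∑ Q : Finpartition P.parts, ((#Q.parts)! : ℝ) := by
        gcongr with P _ Q
        exact Nat.sub_le _ _
    _ ≤ n ! * (3 * c) ^ n := by
        simpa using
          sum_partitions_pow_sum_partitions_factorial_le_general (univ : Finset (Fin n)) hc
    _ = n ! * 3 ^ n * c ^ n := by rw [mul_pow, mul_assoc]
    _ ≤ n ! * Real.exp (2 * n + 1) * c ^ n := by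
        gcongr
        exact (three_pow_le_exp n).trans (Real.exp_le_exp.2 (lt_add_one _).le)
end

section
/- Let A be a commutative ring, α a type, and for each t ∈ ℝ and each finite subset Y ⊆ α let 𝒢_t(Y) : A → A be a map satisfying 𝒢_{t+s}(Y) = 𝒢_t(Y) ∘ 𝒢_s(Y) for all t, s ∈ ℝ and 𝒢_0(Y) = id. Define Exp_∗ on functions f with f(∅) = 0 by (Exp_∗ f)(∅) = 1 and (Exp_∗ f)(Y) = ∑_{P partition of Y} ∏_{X ∈ P} f(X) for nonempty Y, and define Ln_∗ on functions F with F(∅) = 1 by (Ln_∗ F)(∅) = 0 and (Ln_∗ F)(Y) = ∑_{P partition of Y} (−1)^{|P|−1}(|P|−1)! ∏_{X ∈ P} F(X) for nonempty Y. For each t define the nonlinear map Φ_t on functions f with f(∅) = 0 by Φ_t(f)(Y) := Ln_∗( Y' ↦ 𝒢_t(Y')((Exp_∗ f)(Y')) )(Y). Then Φ_0 = id and Φ_{t_1} ∘ Φ_{t_2} = Φ_{t_2} ∘ Φ_{t_1} = Φ_{t_1 + t_2} for all t_1, t_2 ∈ ℝ. -/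
/-- The `∗`-exponential on functions from finite subsets of `α` to a commutative ring:
`(Exp_∗ f)(∅) = 1` and `(Exp_∗ f)(Y) = ∑_{P partition of Y} ∏_{X ∈ P} f(X)` for `Y ≠ ∅`
(the value `1` at `∅` arises from the unique (empty) partition of `∅`). -/
def expStar {α : Type*} [DecidableEq α] {A : Type*} [CommRing A]
    (f : Finset α → A) (Y : Finset α) : A :=
  ∑ P : Finpartition Y, ∏ X ∈ P.parts, f X

/-- The `∗`-logarithm on functions from finite subsets of `α` to a commutative ring:
`(Ln_∗ F)(∅) = 0` and
`(Ln_∗ F)(Y) = ∑_{P partition of Y} (−1)^{|P|−1}(|P|−1)! ∏_{X ∈ P} F(X)` for `Y ≠ ∅`. -/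
def lnStar {α : Type*} [DecidableEq α] {A : Type*} [CommRing A]
    (F : Finset α → A) (Y : Finset α) : A :=
  if Y = ∅ then 0
  else
    ∑ P : Finpartition Y,
      (-1 : A) ^ (P.parts.card - 1) * (Nat.factorial (P.parts.card - 1) : A) *
        ∏ X ∈ P.parts, F X

/-- The nonlinear cluster map `Φ_t(f) = Ln_∗ (Y' ↦ 𝒢_t(Y')((Exp_∗ f)(Y')))` (formula (21)
of the paper), obtained by conjugating the componentwise evolution `𝒢` by the
`∗`-exponential. -/
def clusterMap {α : Type*} [DecidableEq α] {A : Type*} [CommRing A]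
    (𝒢 : ℝ → Finset α → A → A) (t : ℝ) (f : Finset α → A) : Finset α → A :=
  lnStar (fun Y' => 𝒢 t Y' (expStar f Y'))

/-!
For `a ∈ Y`, sorting the partitions of `Y` by the block `B` containing `a` gives the Leibniz-type
recursion `(Exp_∗ f)(Y) = ∑_{a ∈ B ⊆ Y} f(B) (Exp_∗ f)(Y \ B)`, the discrete form of
`(exp f)' = f' exp f`. The coefficients `(-1)^{n-1}(n-1)!` are exactly those for which
`F(Y) = ∑_{a ∈ B ⊆ Y} (Ln_∗ F)(B) F(Y \ B)` holds as well, whenever `F(∅) = 1`. In this relation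
either of the two functions determines the other by induction on `Y`, so `Exp_∗` and `Ln_∗` are
mutually inverse, and conjugation by `Exp_∗` preserves composition.
-/

section

open Finset

section PartitionSums

theorem eq_indiscrete_of_card_parts_eq_one {β : Type*} [Lattice β] [OrderBot β] {a : β}
    (ha : a ≠ ⊥) {P : Finpartition a} (hP : #P.parts = 1) : P = Finpartition.indiscrete ha := by
  obtain ⟨b, hb⟩ := card_eq_one.mp hP
  have hba : b = a := by simpa [hb] using P.sup_parts
  exact Finpartition.ext (by rw [hb, hba, Finpartition.indiscrete_parts])

variable {β : Type*} [GeneralizedBooleanAlgebra β] [DecidableEq β] {a b : β}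

theorem sup_erase_parts (P : Finpartition a) (hb : b ∈ P.parts) :
    (P.parts.erase b).sup id = a \ b := by
  have disjoint_sup : Disjoint b ((P.parts.erase b).sup id) :=
    P.supIndep (erase_subset b P.parts) hb (notMem_erase b P.parts)
  calc (P.parts.erase b).sup id
    _ = (b ⊔ (P.parts.erase b).sup id) \ b := by
      rw [sup_sdiff_left_self, disjoint_sup.sdiff_eq_right]
    _ = (insert b (P.parts.erase b)).sup id \ b := by rw [sup_insert, id]
    _ = a \ b := by rw [insert_erase hb, P.sup_parts]

theorem sum_finpartition_with_mem_parts {M : Type*} [AddCommMonoid M]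
    [Fintype (Finpartition a)] [Fintype (Finpartition (a \ b))]
    (hb : b ≠ ⊥) (hba : b ≤ a) (g : Finset β → M) :
    ∑ P : Finpartition a with b ∈ P.parts, g (P.parts.erase b) =
      ∑ P : Finpartition (a \ b), g P.parts := by
  have notMem_parts (P : Finpartition (a \ b)) : b ∉ P.parts := fun h =>
    hb (disjoint_sdiff_self_right.eq_bot_of_le (P.le h))
  refine sum_bij'
    (fun P hP => P.ofSubset (erase_subset b P.parts) (sup_erase_parts P (mem_filter.mp hP).2))
    (fun P _ => P.extend hb disjoint_sdiff_self_left (sdiff_sup_cancel hba))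
    (fun _ _ => mem_univ _) (fun P _ => ?_) (fun P hP => ?_) (fun P _ => ?_) (fun _ _ => rfl)
  · exact mem_filter.mpr ⟨mem_univ _, mem_insert_self b P.parts⟩
  · exact Finpartition.ext (insert_erase (mem_filter.mp hP).2)
  · exact Finpartition.ext (erase_insert (notMem_parts P))

end PartitionSums

variable {α : Type*} [DecidableEq α]

theorem sum_finpartition_sum_parts_s15 {M : Type*} [AddCommMonoid M] (Y : Finset α)
    (p : Finset α → Prop) [DecidablePred p] (g : Finset α → Finset (Finset α) → M) :
    ∑ P : Finpartition Y, ∑ B ∈ P.parts with p B, g B (P.parts.erase B) =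
      ∑ B ∈ Y.powerset.erase ∅ with p B, ∑ P : Finpartition (Y \ B), g B P.parts := by
  rw [sum_comm' (t' := (Y.powerset.erase ∅).filter p)
    (s' := fun B => univ.filter fun P : Finpartition Y => B ∈ P.parts)]
  · refine sum_congr rfl fun B hB => ?_
    obtain ⟨⟨hB_ne, hB_sub⟩, -⟩ : (B ≠ ∅ ∧ B ⊆ Y) ∧ p B := by simpa using hB
    exact sum_finpartition_with_mem_parts hB_ne hB_sub (g B)
  · intro P B
    simp only [mem_univ, mem_filter, mem_erase, mem_powerset, true_and]
    exact ⟨fun ⟨hB, hp⟩ => ⟨hB, ⟨P.ne_empty hB, P.subset hB⟩, hp⟩, fun ⟨hB, _, hp⟩ => ⟨hB, hp⟩⟩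

theorem filter_mem_parts {Y : Finset α} (P : Finpartition Y) {a : α} (ha : a ∈ Y) :
    {B ∈ P.parts | a ∈ B} = {P.part a} := by
  ext B
  simp only [mem_filter, mem_singleton]
  constructor
  · rintro ⟨hB, haB⟩
    exact (P.part_eq_of_mem hB haB).symm
  · rintro rfl
    exact ⟨P.part_mem.mpr ha, P.mem_part_self.mpr ha⟩

theorem card_filter_notMem_parts_add_one {Y : Finset α} (P : Finpartition Y) {a : α}
    (ha : a ∈ Y) : #{B ∈ P.parts | a ∉ B} + 1 = #P.parts := by
  rw [← card_filter_add_card_filter_not (s := P.parts) (a ∈ ·), filter_mem_parts P ha,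
    card_singleton, add_comm]

section RootedStarProd

variable {R : Type*} [CommSemiring R]

/-- The `∗`-product `∑_{B ⊆ Y} f(B) F(Y \ B)` restricted to the sets `B` containing `a`. It plays
the role of `f' F`, where the derivative is taken in the direction of the point `a`. -/
def rootedStarProd (a : α) (f F : Finset α → R) (Y : Finset α) : R :=
  ∑ B ∈ Y.powerset with a ∈ B, f B * F (Y \ B)

theorem rootedStarProd_eq_add_sum_compl {a : α} {Y : Finset α} (ha : a ∈ Y)
    (f F : Finset α → R) :
    rootedStarProd a f F Y =
      f Y * F ∅ + ∑ C ∈ Y.powerset.erase ∅ with a ∉ C, F C * f (Y \ C) := by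
  have sum_compl : rootedStarProd a f F Y = ∑ C ∈ Y.powerset with a ∉ C, F C * f (Y \ C) := by
    refine sum_nbij' (Y \ ·) (Y \ ·) ?_ ?_ ?_ ?_ ?_ <;>
      simp +contextual [ha, mul_comm]
  rw [sum_compl, filter_erase, ← add_sum_erase _ _ (a := ∅) (by simp), sdiff_empty, mul_comm]

theorem rootedStarProd_congr_right {a : α} {f F G : Finset α → R} {Y : Finset α}
    (h : ∀ C ⊂ Y, F C = G C) : rootedStarProd a f F Y = rootedStarProd a f G Y := by
  refine sum_congr rfl fun B hB => ?_
  obtain ⟨hBY, haB⟩ : B ⊆ Y ∧ a ∈ B := by simpa using hB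
  rw [h (Y \ B) (sdiff_ssubset hBY ⟨a, haB⟩)]

theorem eq_of_rootedStarProd_eq [IsCancelAdd R] {f g F : Finset α → R} (hF : F ∅ = 1)
    (h : ∀ Y, ∀ a ∈ Y, rootedStarProd a f F Y = rootedStarProd a g F Y) {Y : Finset α}
    (hY : Y.Nonempty) : f Y = g Y := by
  induction Y using Finset.strongInduction with
  | H Y ih =>
    obtain ⟨a, ha⟩ := hY
    have sums_eq : ∑ C ∈ Y.powerset.erase ∅ with a ∉ C, F C * f (Y \ C) =
        ∑ C ∈ Y.powerset.erase ∅ with a ∉ C, F C * g (Y \ C) := by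
      refine sum_congr rfl fun C hC => ?_
      obtain ⟨⟨hC_ne, hCY⟩, haC⟩ : (C ≠ ∅ ∧ C ⊆ Y) ∧ a ∉ C := by simpa using hC
      rw [ih (Y \ C) (sdiff_ssubset hCY (nonempty_iff_ne_empty.mpr hC_ne))
        ⟨a, mem_sdiff.mpr ⟨ha, haC⟩⟩]
    have h_root := h Y a ha
    rw [rootedStarProd_eq_add_sum_compl ha, rootedStarProd_eq_add_sum_compl ha, hF, mul_one,
      mul_one, sums_eq] at h_root
    exact add_right_cancel h_root

end RootedStarProd

variable {A : Type*} [CommRing A]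

theorem expStar_empty (f : Finset α → A) : expStar f ∅ = 1 := by
  have parts_eq (P : Finpartition (∅ : Finset α)) : P.parts = ∅ :=
    Finpartition.parts_eq_empty_iff.mpr rfl
  have : Unique (Finpartition (∅ : Finset α)) :=
    inferInstanceAs (Unique (Finpartition (⊥ : Finset α)))
  simp [expStar, parts_eq]

theorem expStar_eq_rootedStarProd (f : Finset α → A) {a : α} {Y : Finset α} (ha : a ∈ Y) :
    expStar f Y = rootedStarProd a f (expStar f) Y := by
  have erase_empty : {B ∈ Y.powerset.erase ∅ | a ∈ B} = {B ∈ Y.powerset | a ∈ B} := by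
    rw [filter_erase, erase_eq_of_notMem (by simp)]
  calc expStar f Y
    _ = ∑ P : Finpartition Y, ∑ B ∈ P.parts with a ∈ B, f B * ∏ X ∈ P.parts.erase B, f X := by
      refine sum_congr rfl fun P _ => ?_
      rw [filter_mem_parts P ha, sum_singleton, mul_prod_erase _ _ (P.part_mem.mpr ha)]
    _ = ∑ B ∈ Y.powerset with a ∈ B, ∑ P : Finpartition (Y \ B), f B * ∏ X ∈ P.parts, f X := by
      rw [sum_finpartition_sum_parts_s15 Y (a ∈ ·) fun B s => f B * ∏ X ∈ s, f X, erase_empty]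
    _ = rootedStarProd a f (expStar f) Y := by
      simp only [rootedStarProd, expStar, mul_sum]

variable (A) in
/-- The weight of a partition into `n ≥ 1` blocks in `lnStar`. -/
def lnCoeff (n : ℕ) : A :=
  (-1) ^ (n - 1) * (n - 1).factorial

theorem lnCoeff_succ_add (n : ℕ) :
    lnCoeff A (n + 1) + n * lnCoeff A n = if n = 0 then 1 else 0 := by
  cases n with
  | zero => simp [lnCoeff]
  | succ k =>
    simp only [lnCoeff, Nat.add_sub_cancel, Nat.factorial_succ, pow_succ, Nat.cast_mul,
      Nat.add_eq_zero_iff, one_ne_zero, and_false, if_false]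
    ring

theorem lnStar_empty (F : Finset α → A) : lnStar F ∅ = 0 :=
  if_pos rfl

theorem lnStar_of_nonempty (F : Finset α → A) {Y : Finset α} (hY : Y.Nonempty) :
    lnStar F Y = ∑ P : Finpartition Y, lnCoeff A #P.parts * ∏ X ∈ P.parts, F X :=
  if_neg hY.ne_empty

theorem lnStar_congr {F G : Finset α → A} (h : ∀ Y, Y.Nonempty → F Y = G Y) :
    lnStar F = lnStar G := by
  funext Y
  rcases Y.eq_empty_or_nonempty with rfl | hY
  · rw [lnStar_empty, lnStar_empty]
  · rw [lnStar_of_nonempty F hY, lnStar_of_nonempty G hY]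
    refine sum_congr rfl fun P _ => ?_
    rw [prod_congr rfl fun X hX => h X (P.nonempty_of_mem_parts hX)]

theorem sum_mul_lnStar_sdiff (F : Finset α → A) {a : α} {Y : Finset α} (ha : a ∈ Y) :
    ∑ C ∈ Y.powerset.erase ∅ with a ∉ C, F C * lnStar F (Y \ C) =
      ∑ P : Finpartition Y,
        ((#P.parts - 1 : ℕ) : A) * lnCoeff A (#P.parts - 1) * ∏ X ∈ P.parts, F X := by
  calc ∑ C ∈ Y.powerset.erase ∅ with a ∉ C, F C * lnStar F (Y \ C)
    _ = ∑ C ∈ Y.powerset.erase ∅ with a ∉ C, ∑ P : Finpartition (Y \ C),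
          F C * (lnCoeff A #P.parts * ∏ X ∈ P.parts, F X) := by
      refine sum_congr rfl fun C hC => ?_
      have ha_compl : a ∈ Y \ C := mem_sdiff.mpr ⟨ha, (mem_filter.mp hC).2⟩
      rw [lnStar_of_nonempty F ⟨a, ha_compl⟩, mul_sum]
    _ = ∑ P : Finpartition Y, ∑ C ∈ P.parts with a ∉ C,
          F C * (lnCoeff A #(P.parts.erase C) * ∏ X ∈ P.parts.erase C, F X) :=
      (sum_finpartition_sum_parts_s15 Y (a ∉ ·)
        fun C s => F C * (lnCoeff A #s * ∏ X ∈ s, F X)).symm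
    _ = ∑ P : Finpartition Y, ∑ C ∈ P.parts with a ∉ C,
          lnCoeff A (#P.parts - 1) * ∏ X ∈ P.parts, F X := by
      refine sum_congr rfl fun P _ => sum_congr rfl fun C hC => ?_
      have hCP : C ∈ P.parts := (mem_filter.mp hC).1
      rw [card_erase_of_mem hCP, mul_left_comm, mul_prod_erase _ _ hCP]
    _ = _ := by
      refine sum_congr rfl fun P _ => ?_
      rw [sum_const, nsmul_eq_mul, mul_assoc, ← card_filter_notMem_parts_add_one P ha,
        Nat.add_sub_cancel]

theorem rootedStarProd_lnStar {F : Finset α → A} (hF : F ∅ = 1) {a : α} {Y : Finset α}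
    (ha : a ∈ Y) : rootedStarProd a (lnStar F) F Y = F Y := by
  have hY : Y ≠ ∅ := ne_empty_of_mem ha
  have coeff_eq (P : Finpartition Y) :
      lnCoeff A #P.parts + ((#P.parts - 1 : ℕ) : A) * lnCoeff A (#P.parts - 1) =
        if #P.parts = 1 then 1 else 0 := by
    obtain ⟨n, hn⟩ := Nat.exists_eq_add_one.mpr (card_pos.mpr (P.parts_nonempty hY))
    simpa [hn] using lnCoeff_succ_add (A := A) n
  rw [rootedStarProd_eq_add_sum_compl ha, hF, mul_one, lnStar_of_nonempty F ⟨a, ha⟩,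
    sum_mul_lnStar_sdiff F ha, ← sum_add_distrib]
  simp only [← add_mul, coeff_eq]
  rw [sum_eq_single (Finpartition.indiscrete hY)]
  · simp
  · intro P _ hP
    rw [if_neg (mt (eq_indiscrete_of_card_parts_eq_one hY) hP), zero_mul]
  · exact fun h => absurd (mem_univ _) h

theorem expStar_lnStar {F : Finset α → A} (hF : F ∅ = 1) : expStar (lnStar F) = F := by
  funext Y
  induction Y using Finset.strongInduction with
  | H Y ih =>
    rcases Y.eq_empty_or_nonempty with rfl | ⟨a, ha⟩
    · rw [expStar_empty, hF]
    · rw [expStar_eq_rootedStarProd _ ha, rootedStarProd_congr_right ih,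
        rootedStarProd_lnStar hF ha]

theorem lnStar_expStar {f : Finset α → A} (hf : f ∅ = 0) : lnStar (expStar f) = f := by
  funext Y
  rcases Y.eq_empty_or_nonempty with rfl | hY
  · rw [lnStar_empty, hf]
  · refine eq_of_rootedStarProd_eq (expStar_empty f) (fun Z a ha => ?_) hY
    rw [rootedStarProd_lnStar (expStar_empty f) ha, ← expStar_eq_rootedStarProd f ha]

theorem expStar_lnStar_of_nonempty (F : Finset α → A) {Y : Finset α} (hY : Y.Nonempty) :
    expStar (lnStar F) Y = F Y := by
  have lnStar_update : lnStar F = lnStar (Function.update F ∅ 1) :=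
    lnStar_congr fun Z hZ => (Function.update_of_ne hZ.ne_empty 1 F).symm
  rw [lnStar_update, expStar_lnStar (Function.update_self ∅ 1 F),
    Function.update_of_ne hY.ne_empty]

/-- The conjugate by the `∗`-exponential of the map acting on functions of finite sets through
`g Y : A → A` in the component `Y`; `clusterMap 𝒢 t` is the conjugate of `𝒢 t`. -/
def clusterConj (g : Finset α → A → A) (f : Finset α → A) : Finset α → A :=
  lnStar fun Y => g Y (expStar f Y)

theorem clusterConj_id {f : Finset α → A} (hf : f ∅ = 0) : clusterConj (fun _ => id) f = f :=
  lnStar_expStar hf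

theorem clusterConj_clusterConj (g h : Finset α → A → A) (f : Finset α → A) :
    clusterConj g (clusterConj h f) = clusterConj (fun Y => g Y ∘ h Y) f :=
  lnStar_congr fun Y hY => congrArg (g Y) (expStar_lnStar_of_nonempty _ hY)

theorem clusterMap_group_general {T : Type*} [AddMonoid T] (𝒢 : T → Finset α → A → A)
    (hgroup : ∀ (t s : T) (Y : Finset α), 𝒢 (t + s) Y = 𝒢 t Y ∘ 𝒢 s Y)
    (hid : ∀ Y : Finset α, 𝒢 0 Y = id) :
    (∀ f : Finset α → A, f ∅ = 0 → clusterConj (𝒢 0) f = f) ∧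
      ∀ (t₁ t₂ : T) (f : Finset α → A),
        clusterConj (𝒢 t₁) (clusterConj (𝒢 t₂) f) = clusterConj (𝒢 (t₁ + t₂)) f := by
  refine ⟨fun f hf => ?_, fun t₁ t₂ f => ?_⟩
  · rw [funext hid, clusterConj_id hf]
  · rw [clusterConj_clusterConj, funext (hgroup t₁ t₂)]

end

/-- **Structural core of Theorem 2 of the paper.** If the maps `𝒢_t(Y) : A → A` form a
one-parameter group componentwise (`𝒢_{t+s}(Y) = 𝒢_t(Y) ∘ 𝒢_s(Y)`, `𝒢_0(Y) = id`), then
the nonlinear cluster maps `Φ_t` form a one-parameter group on functions `f` with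
`f(∅) = 0`: `Φ_0 = id` and `Φ_{t₁} ∘ Φ_{t₂} = Φ_{t₂} ∘ Φ_{t₁} = Φ_{t₁+t₂}`. -/
theorem clusterMap_group {α : Type*} [DecidableEq α] {A : Type*} [CommRing A]
    (𝒢 : ℝ → Finset α → A → A)
    (hgroup : ∀ (t s : ℝ) (Y : Finset α), 𝒢 (t + s) Y = 𝒢 t Y ∘ 𝒢 s Y)
    (hid : ∀ Y : Finset α, 𝒢 0 Y = id) :
    (∀ f : Finset α → A, f ∅ = 0 → clusterMap 𝒢 0 f = f) ∧
      (∀ (t₁ t₂ : ℝ) (f : Finset α → A), f ∅ = 0 →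
        clusterMap 𝒢 t₁ (clusterMap 𝒢 t₂ f) = clusterMap 𝒢 (t₁ + t₂) f ∧
          clusterMap 𝒢 t₂ (clusterMap 𝒢 t₁ f) = clusterMap 𝒢 (t₁ + t₂) f) := by
  obtain ⟨map_zero, map_add⟩ := clusterMap_group_general 𝒢 hgroup hid
  exact ⟨map_zero, fun t₁ t₂ f _ => ⟨map_add t₁ t₂ f, add_comm t₁ t₂ ▸ map_add t₂ t₁ f⟩⟩
end
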